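/- arXiv:2512.00584 — 2 statements merged into one kernel-verified Lean document; each statement's English description precedes it below -/
import Mathlib

section
/- Let S = K[X_0,…,X_n] and let < be the lexicographic order with X_0 > X_1 > ⋯ > X_n. Then: (i) for any polynomial f ∈ S, some monomial divisible by X_0 lies in the support of f if and only if in_<(f) is divisible by X_0; and (ii) if I ⊆ S is a homogeneous ideal whose initial ideal in_<(I) is squarefree, then no monomial divisible by X_0^2 lies in the support of any element of the reduced Gröbner basis of I. -/
open MvPolynomial

/-- The leading exponent (multidegree) of a multivariate polynomial with respect to a
monomial order: the maximum of its support. (It is `0` for the zero polynomial.) -/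
noncomputable def MonomialOrder.mdeg {σ : Type*} (m : MonomialOrder σ) {R : Type*}
    [CommSemiring R] (f : MvPolynomial σ R) : σ →₀ ℕ :=
  m.toSyn.symm (f.support.sup fun e => m.toSyn e)

/-- The initial ideal of an ideal `I` with respect to a monomial order. -/
noncomputable def initialIdeal {σ : Type*} {K : Type*} [Field K] (m : MonomialOrder σ)
    (I : Ideal (MvPolynomial σ K)) : Ideal (MvPolynomial σ K) :=
  Ideal.span {g | ∃ f ∈ I, f ≠ 0 ∧ g = monomial (m.mdeg f) (1 : K)}

/-- A monomial ideal is squarefree if it is generated by squarefree monomials. -/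
def IsSquarefreeMonomialIdeal {σ : Type*} {K : Type*} [Field K]
    (J : Ideal (MvPolynomial σ K)) : Prop :=
  ∃ T : Set (σ →₀ ℕ), (∀ e ∈ T, ∀ i, e i ≤ 1) ∧
    J = Ideal.span ((fun e => monomial e (1 : K)) '' T)

/-- `G` is a Gröbner basis of `I` w.r.t. the monomial order `m`: a subset of `I` (of nonzero
elements) whose leading monomials generate the initial ideal of `I`. -/
def IsGroebnerBasis {σ : Type*} {K : Type*} [Field K] (m : MonomialOrder σ)
    (I : Ideal (MvPolynomial σ K)) (G : Set (MvPolynomial σ K)) : Prop :=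
  (G : Set (MvPolynomial σ K)) ⊆ I ∧ (0 : MvPolynomial σ K) ∉ G ∧
    initialIdeal m I = Ideal.span ((fun g => monomial (m.mdeg g) (1 : K)) '' G)

/-- `G` is the reduced Gröbner basis of `I`: a Gröbner basis whose elements are monic and
such that no monomial in the support of an element lies in the ideal generated by the leading
monomials of the other elements. -/
def IsReducedGroebnerBasis {σ : Type*} {K : Type*} [Field K] (m : MonomialOrder σ)
    (I : Ideal (MvPolynomial σ K)) (G : Set (MvPolynomial σ K)) : Prop :=
  IsGroebnerBasis m I G ∧ (∀ g ∈ G, coeff (m.mdeg g) g = 1) ∧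
    ∀ g ∈ G, ∀ e ∈ g.support,
      (monomial e (1 : K)) ∉ Ideal.span ((fun h => monomial (m.mdeg h) (1 : K)) '' (G \ {g}))

/-- An ideal is homogeneous (w.r.t. the standard grading) iff it contains all homogeneous
components of its elements. -/
def IsHomog {σ : Type*} {K : Type*} [Field K] (I : Ideal (MvPolynomial σ K)) : Prop :=
  ∀ f ∈ I, ∀ d : ℕ, homogeneousComponent d f ∈ I

/-!
In a lexicographic order the exponent of the largest variable `X₀` is compared first, so the degree
of a polynomial in `X₀` is the `X₀`-exponent of its leading monomial; (i) is immediate from this.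
For (ii), the leading monomials of a reduced Gröbner basis belong to every set of monomials
generating the initial ideal. If that ideal is squarefree, they are therefore squarefree, and in
particular have degree at most one in `X₀`.
-/

section LeadingExponent

variable {σ R : Type*} [CommSemiring R] {m : MonomialOrder σ} {i : σ}

theorem mdeg_eq_degree (m : MonomialOrder σ) (f : MvPolynomial σ R) : m.mdeg f = m.degree f :=
  rfl

open scoped MonomialOrder in
/-- `m` is an elimination order for the variable `i`. By cancellation it is the same to ask, as is
customary, that every monomial divisible by `X i` exceeds every monomial not divisible by it. -/
def IsEliminationOrder (m : MonomialOrder σ) (i : σ) : Prop :=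
  ∀ ⦃a b : σ →₀ ℕ⦄, a i < b i → a ≺[m] b

theorem isEliminationOrder_lex_bot [LinearOrder σ] [OrderBot σ] [WellFoundedGT σ] :
    IsEliminationOrder (MonomialOrder.lex (σ := σ)) ⊥ := fun _ _ hlt =>
  MonomialOrder.lex_lt_iff.2 <|
    Finsupp.Lex.lt_iff.2 ⟨⊥, fun _ hj => absurd hj not_lt_bot, hlt⟩

theorem IsEliminationOrder.degreeOf_eq_mdeg_apply (hm : IsEliminationOrder m i)
    (f : MvPolynomial σ R) : f.degreeOf i = m.mdeg f i := by
  rw [mdeg_eq_degree]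
  rcases eq_or_ne f 0 with rfl | hf
  · simp
  · apply le_antisymm
    · exact degreeOf_le_iff.2 fun e he => not_lt.1 fun hlt => (m.le_degree he).not_gt (hm hlt)
    · exact degreeOf_le_iff.1 le_rfl _ (m.degree_mem_support hf)

theorem lt_degreeOf_iff {f : MvPolynomial σ R} {k : ℕ} :
    k < f.degreeOf i ↔ ∃ e ∈ f.support, k < e i := by
  simpa only [not_le, not_forall, exists_prop] using (degreeOf_le_iff (f := f) (d := k)).not

end LeadingExponent

theorem monomial_one_mem_span_monomial_image_iff {σ R ι : Type*} [CommSemiring R] [Nontrivial R]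
    (s : ι → σ →₀ ℕ) (A : Set ι) (e : σ →₀ ℕ) :
    monomial e (1 : R) ∈ Ideal.span ((fun a => monomial (s a) (1 : R)) '' A) ↔
      ∃ a ∈ A, s a ≤ e := by
  classical
  rw [← Set.image_image (fun t => monomial t (1 : R)) s, mem_ideal_span_monomial_image]
  simp [support_monomial]

section ReducedGroebnerBasis

variable {σ K : Type*} [Field K] {m : MonomialOrder σ} {I : Ideal (MvPolynomial σ K)}
  {G : Set (MvPolynomial σ K)}

theorem IsReducedGroebnerBasis.eq_of_mdeg_le (hG : IsReducedGroebnerBasis m I G)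
    {g h : MvPolynomial σ K} (hg : g ∈ G) (hh : h ∈ G) (hle : m.mdeg h ≤ m.mdeg g) : h = g := by
  obtain ⟨-, hmonic, hreduced⟩ := hG
  have hsupp : m.mdeg g ∈ g.support := by simp [hmonic g hg]
  by_contra hne
  exact hreduced g hg _ hsupp <|
    (monomial_one_mem_span_monomial_image_iff _ _ _).2 ⟨h, ⟨hh, hne⟩, hle⟩

theorem IsReducedGroebnerBasis.mdeg_mem_of_initialIdeal_eq_span
    (hG : IsReducedGroebnerBasis m I G) {T : Set (σ →₀ ℕ)}
    (hT : initialIdeal m I = Ideal.span ((fun t => monomial t (1 : K)) '' T))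
    {g : MvPolynomial σ K} (hg : g ∈ G) : m.mdeg g ∈ T := by
  have hspan := hG.1.2.2.symm.trans hT
  obtain ⟨t, ht, htg⟩ : ∃ t ∈ T, t ≤ m.mdeg g := by
    rw [← monomial_one_mem_span_monomial_image_iff (R := K) (fun t => t), ← hspan]
    exact Ideal.subset_span ⟨g, hg, rfl⟩
  obtain ⟨h, hh, hht⟩ : ∃ h ∈ G, m.mdeg h ≤ t := by
    rw [← monomial_one_mem_span_monomial_image_iff (R := K) m.mdeg, hspan]
    exact Ideal.subset_span ⟨t, ht, rfl⟩
  obtain rfl : h = g := hG.eq_of_mdeg_le hg hh (hht.trans htg)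
  rwa [hht.antisymm htg]

theorem IsReducedGroebnerBasis.mdeg_apply_le_one (hG : IsReducedGroebnerBasis m I G)
    (hI : IsSquarefreeMonomialIdeal (initialIdeal m I)) {g : MvPolynomial σ K} (hg : g ∈ G)
    (i : σ) : m.mdeg g i ≤ 1 := by
  obtain ⟨T, hsquarefree, hspan⟩ := hI
  exact hsquarefree _ (hG.mdeg_mem_of_initialIdeal_eq_span hspan hg) i

end ReducedGroebnerBasis

theorem lex_supp_X0_iff_and_reduced_GB_no_X0_sq_general {σ K : Type*} [Field K]
    {m : MonomialOrder σ} {i : σ} (hm : IsEliminationOrder m i) :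
    (∀ f : MvPolynomial σ K, (∃ e ∈ f.support, 1 ≤ e i) ↔ 1 ≤ m.mdeg f i) ∧
    (∀ I : Ideal (MvPolynomial σ K), IsSquarefreeMonomialIdeal (initialIdeal m I) →
      ∀ G : Set (MvPolynomial σ K), IsReducedGroebnerBasis m I G →
        ∀ g ∈ G, ∀ e ∈ g.support, e i ≤ 1) := by
  refine ⟨fun f => ?_, fun I hI G hG g hg => degreeOf_le_iff.1 ?_⟩
  · rw [← hm.degreeOf_eq_mdeg_apply]
    exact lt_degreeOf_iff.symm
  · rw [hm.degreeOf_eq_mdeg_apply]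
    exact hG.mdeg_apply_le_one hI hg i

/-- **Statement 7.** For the lexicographic order with `X_0 > X_1 > ⋯ > X_n`:
(i) a polynomial `f` has a monomial divisible by `X_0` in its support iff its leading monomial
is divisible by `X_0`; and (ii) if `I` is a homogeneous ideal whose lex initial ideal is
squarefree, then no monomial divisible by `X_0^2` occurs in the support of any element of the
reduced Gröbner basis of `I`. -/
theorem lex_supp_X0_iff_and_reduced_GB_no_X0_sq {K : Type*} [Field K] {n : ℕ} :
    (∀ f : MvPolynomial (Fin (n + 1)) K,
      (∃ e ∈ f.support, 1 ≤ e 0) ↔ 1 ≤ (MonomialOrder.lex.mdeg f) 0) ∧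
    (∀ I : Ideal (MvPolynomial (Fin (n + 1)) K), IsHomog I →
      IsSquarefreeMonomialIdeal (initialIdeal MonomialOrder.lex I) →
      ∀ G : Set (MvPolynomial (Fin (n + 1)) K),
        IsReducedGroebnerBasis MonomialOrder.lex I G →
        ∀ g ∈ G, ∀ e ∈ g.support, e 0 ≤ 1) := by
  exact (lex_supp_X0_iff_and_reduced_GB_no_X0_sq_general isEliminationOrder_lex_bot).imp_right
    fun hreduced I _ => hreduced I
end

section
/- Let K be an algebraically closed field, S = K[X_0,…,X_n], < a monomial order with X_0 > ⋯ > X_n, and I ⊆ S homogeneous with in_<(I) = I_Δ for a graph Δ on {0,…,n} containing every vertex; let X = V(I) ⊆ P^n, let π : P^n \ {P_0} → H_0 = {X_0 = 0} ≅ P^{n−1} be the projection from P_0 = [1:0:⋯:0], and let X' ⊆ P^{n−1} be the closure of π(X \ {P_0}), which is defined by I' = I ∩ K[X_1,…,X_n]. Assume 0 is a free vertex of Δ, and let {g_σ : σ ∈ mnf(Δ)} be a Gröbner basis of I with in_<(g_σ) = X_σ. Suppose a ∈ {1,…,n} is such that the coordinate point P'_a lies in X' and there exists j ∈ {1,…,n}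 with X_0 X_a ∈ supp(g_{0j}) (which holds automatically with j = a if {0,a} ∉ Δ). Then there exists a unique point Q ∈ X with π(Q) = P'_a, and X is singular at Q if and only if X' is singular at P'_a. -/
open MvPolynomial

/-- A monomial order on `X_0, …, X_n` satisfies `X_0 > X_1 > ⋯ > X_n`. -/
def MonomialOrder.Descending {n : ℕ} (m : MonomialOrder (Fin (n + 1))) : Prop :=
  ∀ i j : Fin (n + 1), i < j →
    m.toSyn (Finsupp.single j 1) < m.toSyn (Finsupp.single i 1)

/-- An abstract simplicial complex on the vertex set `{0, …, n}`. -/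
structure SComplex (n : ℕ) where
  faces : Set (Finset (Fin (n + 1)))
  down_closed : ∀ {s t : Finset (Fin (n + 1))}, s ∈ faces → t ⊆ s → t ∈ faces

/-- A simplicial complex is 1-dimensional (a graph) if all faces have at most 2 vertices and
some face has exactly 2 vertices. -/
def SComplex.IsGraph {n : ℕ} (Δ : SComplex n) : Prop :=
  (∀ s ∈ Δ.faces, s.card ≤ 2) ∧ ∃ s ∈ Δ.faces, s.card = 2

/-- The set of minimal non-faces of a simplicial complex. -/
def SComplex.mnf {n : ℕ} (Δ : SComplex n) : Set (Finset (Fin (n + 1))) :=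
  {s | s ∉ Δ.faces ∧ ∀ t ⊂ s, t ∈ Δ.faces}

/-- The Stanley–Reisner ideal of a simplicial complex. -/
noncomputable def SComplex.srIdeal {n : ℕ} (K : Type*) [Field K] (Δ : SComplex n) :
    Ideal (MvPolynomial (Fin (n + 1)) K) :=
  Ideal.span {g | ∃ s : Finset (Fin (n + 1)), s ∉ Δ.faces ∧ g = ∏ i ∈ s, X i}

/-- A vertex of a graph is free if it belongs to exactly one edge. -/
def SComplex.FreeVertex {n : ℕ} (Δ : SComplex n) (v : Fin (n + 1)) : Prop :=
  ∃! e : Finset (Fin (n + 1)), e ∈ Δ.faces ∧ e.card = 2 ∧ v ∈ e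

/-- The exponent of the squarefree monomial `X_σ = ∏_{i ∈ σ} X_i`. -/
noncomputable def expOf {n : ℕ} (s : Finset (Fin (n + 1))) : Fin (n + 1) →₀ ℕ :=
  ∑ i ∈ s, Finsupp.single i 1

/-- The (vector representatives of the) points of the projective variety `V(I)`. -/
def projZeros {ι : Type*} [Fintype ι] {K : Type*} [Field K] (I : Ideal (MvPolynomial ι K)) :
    Set (ι → K) :=
  {x | x ≠ 0 ∧ ∀ f ∈ I, eval x f = 0}

/-- The points of the projective variety `V(I)`, as a subset of projective space. -/
def projV {n : ℕ} {K : Type*} [Field K] (I : Ideal (MvPolynomial (Fin (n + 1)) K)) :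
    Set (Projectivization K (Fin (n + 1) → K)) :=
  {p | ∀ f ∈ I, eval p.rep f = 0}

/-- The rank at the point `x` of the Jacobian matrix of the ideal `I`. -/
noncomputable def jacobianRank {ι : Type*} [Fintype ι] {K : Type*} [Field K]
    (I : Ideal (MvPolynomial ι K)) (x : ι → K) : ℕ :=
  Module.finrank K
    (Submodule.span K {w : ι → K | ∃ f ∈ I, w = fun i => eval x (pderiv i f)})

/-- The projective variety `V(I)` is connected. -/
def IsConnectedProjVariety {n : ℕ} {K : Type*} [Field K]
    (I : Ideal (MvPolynomial (Fin (n + 1)) K)) : Prop :=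
  (projZeros I).Nonempty ∧
    ∀ J₁ J₂ : Ideal (MvPolynomial (Fin (n + 1)) K), IsHomog J₁ → IsHomog J₂ →
      projZeros I ⊆ projZeros J₁ ∪ projZeros J₂ →
      projZeros I ∩ (projZeros J₁ ∩ projZeros J₂) = ∅ →
      projZeros I ⊆ projZeros J₁ ∨ projZeros I ⊆ projZeros J₂

/-!
Let `g ∈ I` have degree at most one in `X_0`, say `g = X_0 l + q`. Pseudo-division by `g` gives,
for every `f ∈ I`, an identity `l ^ N * f = g * h + r` with `r` in the elimination ideal `I'`.
Evaluate it at `(t, x)`, where `x ∈ V(I')` and `l(x) ≠ 0`: all of `I` vanishes there as soon as `g`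
does, and that happens for exactly one `t`. Differentiate it at that point: the gradients of `I`
are spanned by those of `I'` together with `∇g`, and `∇g` is independent of the former because its
`X_0`-entry is `l(x) ≠ 0`. Hence the Jacobian rank drops by exactly one under the projection.

Since `X_0² > X_0 X_j`, the polynomial `g_{0j}`, and with it its quadratic component, has degree at
most one in `X_0`; for the quadratic component, `l(P'_a)` is the coefficient of `X_0 X_a`.
-/

section HomogeneousEvaluation

variable {σ R : Type*} [CommSemiring R] {p : MvPolynomial σ R} {d : ℕ}

theorem eval_smul_of_isHomogeneous (hp : p.IsHomogeneous d) (c : R) (x : σ → R) :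
    eval (c • x) p = c ^ d * eval x p := by
  rw [eval_eq, eval_eq, Finset.mul_sum]
  refine Finset.sum_congr rfl fun s hs => ?_
  simp only [Pi.smul_apply, smul_eq_mul, mul_pow, Finset.prod_mul_distrib,
    Finset.prod_pow_eq_pow_sum, hp.degree_eq_sum_deg_support hs]
  ring

theorem eval_coordPoint_of_isHomogeneous [DecidableEq σ] (hp : p.IsHomogeneous d) (a : σ) :
    eval (fun i => if i = a then 1 else 0) p = coeff (Finsupp.single a d) p := by
  rw [eval_eq, Finset.sum_eq_single (Finsupp.single a d)]
  · rw [Finset.prod_eq_one, mul_one]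
    intro i hi
    obtain rfl : i = a := Finset.mem_singleton.mp (Finsupp.support_single_subset hi)
    simp
  · intro s hs hsa
    obtain ⟨i, hi, hia⟩ : ∃ i ∈ s.support, i ≠ a := by
      by_contra! hsupp
      have hs_single : s = Finsupp.single a (s a) :=
        Finsupp.support_subset_singleton.mp fun i hi => Finset.mem_singleton.mpr (hsupp i hi)
      have hdeg : s.degree = d := (hp.degree_eq_sum_deg_support hs).symm
      rw [hs_single, Finsupp.degree_single] at hdeg
      exact hsa (hdeg ▸ hs_single)
    have hfactor : (if i = a then (1 : R) else 0) ^ s i = 0 := by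
      rw [if_neg hia, zero_pow (Finsupp.mem_support_iff.mp hi)]
    rw [Finset.prod_eq_zero hi hfactor, mul_zero]
  · intro hs
    rw [notMem_support_iff.mp hs, zero_mul]

end HomogeneousEvaluation

section Gradient

variable {σ R : Type*} [CommSemiring R] {I : Ideal (MvPolynomial σ R)}

/-- The gradient of a polynomial at the point `x`, as a linear map in the polynomial. -/
noncomputable def gradientAt (x : σ → R) : MvPolynomial σ R →ₗ[R] (σ → R) :=
  LinearMap.pi fun i => (aeval x).toLinearMap ∘ₗ (pderiv i).toLinearMap

theorem gradientAt_apply (x : σ → R) (f : MvPolynomial σ R) (i : σ) :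
    gradientAt x f i = eval x (pderiv i f) := by
  simp [gradientAt, aeval_eq_eval]

theorem gradientAt_mul (x : σ → R) (f g : MvPolynomial σ R) :
    gradientAt x (f * g) = eval x f • gradientAt x g + eval x g • gradientAt x f := by
  ext i
  simp [gradientAt_apply, Derivation.leibniz]

theorem gradientAt_smul_of_isHomogeneous {p : MvPolynomial σ R} {d : ℕ}
    (hp : p.IsHomogeneous d) (c : R) (x : σ → R) :
    gradientAt (c • x) p = c ^ (d - 1) • gradientAt x p := by
  ext i
  simp only [gradientAt_apply, Pi.smul_apply, smul_eq_mul, eval_smul_of_isHomogeneous hp.pderiv]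

/-- The row space of the Jacobian matrix of `I` at `x`: all gradients at `x` of elements of `I`.
These gradients are closed under linear combinations, so no span is taken. -/
noncomputable def gradientSpace (I : Ideal (MvPolynomial σ R)) (x : σ → R) :
    Submodule R (σ → R) :=
  (I.restrictScalars R).map (gradientAt x)

theorem gradientAt_mem_gradientSpace {f : MvPolynomial σ R} (hf : f ∈ I) (x : σ → R) :
    gradientAt x f ∈ gradientSpace I x :=
  Submodule.mem_map_of_mem (Submodule.restrictScalars_mem R I f |>.mpr hf)

theorem gradientSpace_le_iff {x : σ → R} {W : Submodule R (σ → R)} :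
    gradientSpace I x ≤ W ↔ ∀ f ∈ I, gradientAt x f ∈ W :=
  Submodule.map_le_iff_le_comap

end Gradient

section HomogeneousIdeal

variable {ι K : Type*} [Field K] {I : Ideal (MvPolynomial ι K)}

theorem eval_smul_eq_zero_of_isHomog (hI : IsHomog I) {x : ι → K}
    (hx : ∀ f ∈ I, eval x f = 0) (c : K) : ∀ f ∈ I, eval (c • x) f = 0 := by
  intro f hf
  rw [← sum_homogeneousComponent f, map_sum]
  refine Finset.sum_eq_zero fun d _ => ?_
  rw [eval_smul_of_isHomogeneous (homogeneousComponent_isHomogeneous d f), hx _ (hI f hf d),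
    mul_zero]

theorem gradientSpace_smul_le (hI : IsHomog I) (c : K) (x : ι → K) :
    gradientSpace I (c • x) ≤ gradientSpace I x := by
  refine gradientSpace_le_iff.mpr fun f hf => ?_
  rw [← sum_homogeneousComponent f, map_sum]
  refine Submodule.sum_mem _ fun d _ => ?_
  rw [gradientAt_smul_of_isHomogeneous (homogeneousComponent_isHomogeneous d f)]
  exact Submodule.smul_mem _ _ (gradientAt_mem_gradientSpace (hI f hf d) x)

theorem gradientSpace_smul (hI : IsHomog I) {c : K} (hc : c ≠ 0) (x : ι → K) :
    gradientSpace I (c • x) = gradientSpace I x :=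
  (gradientSpace_smul_le hI c x).antisymm <| by
    simpa only [inv_smul_smul₀ hc] using gradientSpace_smul_le hI c⁻¹ (c • x)

theorem jacobianRank_eq_finrank_gradientSpace [Fintype ι] (I : Ideal (MvPolynomial ι K))
    (x : ι → K) : jacobianRank I x = Module.finrank K (gradientSpace I x) := by
  have hrows : {w : ι → K | ∃ f ∈ I, w = fun i => eval x (pderiv i f)} =
      (gradientSpace I x : Set (ι → K)) := by
    ext w
    simp only [gradientSpace, Set.mem_ofPred_eq, SetLike.mem_coe, Submodule.mem_map,
      Submodule.restrictScalars_mem, funext_iff, gradientAt_apply, eq_comm]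
  rw [jacobianRank, hrows, Submodule.span_eq]

theorem jacobianRank_smul [Fintype ι] (hI : IsHomog I) {c : K} (hc : c ≠ 0) (x : ι → K) :
    jacobianRank I (c • x) = jacobianRank I x := by
  rw [jacobianRank_eq_finrank_gradientSpace, jacobianRank_eq_finrank_gradientSpace,
    gradientSpace_smul hI hc]

theorem jacobianRank_mk_rep [Fintype ι] (hI : IsHomog I) {v : ι → K} (hv : v ≠ 0) :
    jacobianRank I (Projectivization.mk K v hv).rep = jacobianRank I v := by
  obtain ⟨u, hu⟩ := Projectivization.exists_smul_eq_mk_rep K v hv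
  rw [← hu]
  exact jacobianRank_smul hI u.ne_zero v

end HomogeneousIdeal

section FirstVariable

variable {R : Type*} [CommSemiring R] {n : ℕ}

theorem finSuccEquiv_rename_succ (p : MvPolynomial (Fin n) R) :
    finSuccEquiv R n (rename Fin.succ p) = Polynomial.C p := by
  induction p using MvPolynomial.induction_on with
  | C a => simp [finSuccEquiv_apply]
  | add p q hp hq => simp only [map_add, hp, hq]
  | mul_X p i hp => simp only [map_mul, hp, rename_X, finSuccEquiv_X_succ]

theorem natDegree_finSuccEquiv_le_one {g : MvPolynomial (Fin (n + 1)) R}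
    (hg : g.degreeOf 0 ≤ 1) : (finSuccEquiv R n g).natDegree ≤ 1 :=
  (natDegree_finSuccEquiv g).trans_le hg

theorem eq_X_zero_mul_add_of_degreeOf_le_one {g : MvPolynomial (Fin (n + 1)) R}
    (hg : g.degreeOf 0 ≤ 1) :
    g = X 0 * rename Fin.succ ((finSuccEquiv R n g).coeff 1) +
      rename Fin.succ ((finSuccEquiv R n g).coeff 0) := by
  apply (finSuccEquiv R n).injective
  rw [map_add, map_mul, finSuccEquiv_X_zero, finSuccEquiv_rename_succ, finSuccEquiv_rename_succ,
    mul_comm]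
  exact Polynomial.eq_X_add_C_of_natDegree_le_one (natDegree_finSuccEquiv_le_one hg)

theorem eval_cons_rename_succ (t : R) (x : Fin n → R) (p : MvPolynomial (Fin n) R) :
    eval (Fin.cons t x : Fin (n + 1) → R) (rename Fin.succ p) = eval x p := by
  rw [eval_rename]
  rfl

theorem eval_cons_of_degreeOf_le_one {g : MvPolynomial (Fin (n + 1)) R}
    (hg : g.degreeOf 0 ≤ 1) (t : R) (x : Fin n → R) :
    eval (Fin.cons t x : Fin (n + 1) → R) g =
      t * eval x ((finSuccEquiv R n g).coeff 1) + eval x ((finSuccEquiv R n g).coeff 0) := by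
  conv_lhs => rw [eq_X_zero_mul_add_of_degreeOf_le_one hg]
  simp [eval_cons_rename_succ]

theorem gradientAt_cons_rename_succ (t : R) (x : Fin n → R) (r : MvPolynomial (Fin n) R) :
    gradientAt (Fin.cons t x) (rename Fin.succ r) =
      (Fin.cons 0 (gradientAt x r) : Fin (n + 1) → R) := by
  ext i
  refine Fin.cases ?_ (fun k => ?_) i
  · have hvars : (0 : Fin (n + 1)) ∉ (rename Fin.succ r).vars := fun h0 => by
      obtain ⟨k, -, hk⟩ := mem_vars_rename Fin.succ r h0
      exact Fin.succ_ne_zero k hk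
    rw [gradientAt_apply, pderiv_eq_zero_of_notMem_vars hvars, map_zero, Fin.cons_zero]
  · rw [gradientAt_apply, pderiv_rename (Fin.succ_injective n), eval_cons_rename_succ,
      Fin.cons_succ, gradientAt_apply]

theorem gradientAt_cons_apply_zero_of_degreeOf_le_one {g : MvPolynomial (Fin (n + 1)) R}
    (hg : g.degreeOf 0 ≤ 1) (t : R) (x : Fin n → R) :
    gradientAt (Fin.cons t x) g 0 = eval x ((finSuccEquiv R n g).coeff 1) := by
  conv_lhs => rw [eq_X_zero_mul_add_of_degreeOf_le_one hg]
  rw [map_add, gradientAt_mul, gradientAt_cons_rename_succ, gradientAt_cons_rename_succ]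
  simp [gradientAt_apply, eval_cons_rename_succ]

/-- The elimination ideal `I' = I ∩ K[X_1, …, X_n]`, with `X_1, …, X_n` renumbered by `Fin n`. -/
noncomputable abbrev elimIdeal (I : Ideal (MvPolynomial (Fin (n + 1)) R)) :
    Ideal (MvPolynomial (Fin n) R) :=
  Ideal.comap (rename (Fin.succ : Fin n → Fin (n + 1))) I

end FirstVariable

section PseudoDivision

variable {R : Type*} [CommRing R]

theorem exists_C_coeff_one_pow_mul_eq {g : Polynomial R} (hg : g.natDegree ≤ 1)
    (f : Polynomial R) :
    ∃ (N : ℕ) (h : Polynomial R) (r : R),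
      Polynomial.C (g.coeff 1) ^ N * f = g * h + Polynomial.C r := by
  have hlinear := Polynomial.eq_X_add_C_of_natDegree_le_one hg
  induction f using Polynomial.induction_on' with
  | add f₁ f₂ ih₁ ih₂ =>
    obtain ⟨N₁, h₁, r₁, e₁⟩ := ih₁
    obtain ⟨N₂, h₂, r₂, e₂⟩ := ih₂
    refine ⟨N₁ + N₂, Polynomial.C (g.coeff 1) ^ N₂ * h₁ + Polynomial.C (g.coeff 1) ^ N₁ * h₂,
      g.coeff 1 ^ N₂ * r₁ + g.coeff 1 ^ N₁ * r₂, ?_⟩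
    simp only [Polynomial.C_add, Polynomial.C_mul, Polynomial.C_pow]
    linear_combination
      Polynomial.C (g.coeff 1) ^ N₂ * e₁ + Polynomial.C (g.coeff 1) ^ N₁ * e₂
  | monomial k b =>
    induction k with
    | zero => exact ⟨0, 0, b, by simp⟩
    | succ k ih =>
      obtain ⟨N, h, r, e⟩ := ih
      refine ⟨N + 1, Polynomial.C (g.coeff 1) * Polynomial.X * h + Polynomial.C r,
        -(g.coeff 0 * r), ?_⟩
      rw [← Polynomial.monomial_mul_X, Polynomial.C_neg, Polynomial.C_mul]
      linear_combination
        Polynomial.C (g.coeff 1) * Polynomial.X * e - Polynomial.C r * hlinear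

variable {n : ℕ}

theorem exists_rename_coeff_one_pow_mul_eq {g : MvPolynomial (Fin (n + 1)) R}
    (hg : g.degreeOf 0 ≤ 1) (f : MvPolynomial (Fin (n + 1)) R) :
    ∃ (N : ℕ) (h : MvPolynomial (Fin (n + 1)) R) (r : MvPolynomial (Fin n) R),
      rename Fin.succ ((finSuccEquiv R n g).coeff 1) ^ N * f = g * h + rename Fin.succ r := by
  obtain ⟨N, h, r, e⟩ :=
    exists_C_coeff_one_pow_mul_eq (R := MvPolynomial (Fin n) R)
      (natDegree_finSuccEquiv_le_one hg) (finSuccEquiv R n f)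
  refine ⟨N, (finSuccEquiv R n).symm h, r, (finSuccEquiv R n).injective ?_⟩
  simpa only [map_mul, map_pow, map_add, finSuccEquiv_rename_succ, AlgEquiv.apply_symm_apply]
    using e

theorem exists_mem_elimIdeal_rename_coeff_one_pow_mul_eq {I : Ideal (MvPolynomial (Fin (n + 1)) R)}
    {f g : MvPolynomial (Fin (n + 1)) R} (hgI : g ∈ I) (hg : g.degreeOf 0 ≤ 1) (hf : f ∈ I) :
    ∃ (N : ℕ) (h : MvPolynomial (Fin (n + 1)) R), ∃ r ∈ elimIdeal I,
      rename Fin.succ ((finSuccEquiv R n g).coeff 1) ^ N * f = g * h + rename Fin.succ r := by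
  obtain ⟨N, h, r, e⟩ := exists_rename_coeff_one_pow_mul_eq hg f
  refine ⟨N, h, r, ?_, e⟩
  rw [Ideal.mem_comap, ← I.add_mem_iff_right (I.mul_mem_right h hgI), ← e]
  exact I.mul_mem_left _ hf

end PseudoDivision

section Elimination

variable {K : Type*} [Field K] {n : ℕ} {I : Ideal (MvPolynomial (Fin (n + 1)) K)}
  {g : MvPolynomial (Fin (n + 1)) K} {x : Fin n → K}

theorem forall_eval_cons_eq_zero_iff (hgI : g ∈ I) (hg : g.degreeOf 0 ≤ 1)
    (hx : ∀ r ∈ elimIdeal I, eval x r = 0)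
    (hgx : eval x ((finSuccEquiv K n g).coeff 1) ≠ 0) (t : K) :
    (∀ f ∈ I, eval (Fin.cons t x : Fin (n + 1) → K) f = 0) ↔
      t = -eval x ((finSuccEquiv K n g).coeff 0) / eval x ((finSuccEquiv K n g).coeff 1) := by
  rw [eq_div_iff hgx, ← add_eq_zero_iff_eq_neg, ← eval_cons_of_degreeOf_le_one hg]
  refine ⟨fun hI => hI g hgI, fun hgt f hf => ?_⟩
  obtain ⟨N, h, r, hr, e⟩ := exists_mem_elimIdeal_rename_coeff_one_pow_mul_eq hgI hg hf
  have heval := congrArg (eval (Fin.cons t x : Fin (n + 1) → K)) e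
  simp only [map_mul, map_pow, map_add, eval_cons_rename_succ, hgt, hx r hr, zero_mul,
    add_zero] at heval
  exact (mul_eq_zero.mp heval).resolve_left (pow_ne_zero N hgx)

theorem gradientSpace_cons_eq_sup (hgI : g ∈ I) (hg : g.degreeOf 0 ≤ 1)
    (hgx : eval x ((finSuccEquiv K n g).coeff 1) ≠ 0) {t : K}
    (ht : ∀ f ∈ I, eval (Fin.cons t x : Fin (n + 1) → K) f = 0) :
    gradientSpace I (Fin.cons t x) =
      (gradientSpace (elimIdeal I) x).map (LinearMap.vecCons 0 LinearMap.id) ⊔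
        Submodule.span K {gradientAt (Fin.cons t x) g} := by
  apply le_antisymm
  · refine gradientSpace_le_iff.mpr fun f hf => ?_
    obtain ⟨N, h, r, hr, e⟩ := exists_mem_elimIdeal_rename_coeff_one_pow_mul_eq hgI hg hf
    have hgrad := congrArg (gradientAt (Fin.cons t x)) e
    rw [map_add, gradientAt_mul, gradientAt_mul, gradientAt_cons_rename_succ, ht f hf, ht g hgI,
      zero_smul, zero_smul, add_zero, zero_add, map_pow, eval_cons_rename_succ,
      add_comm (eval _ h • _)] at hgrad
    rw [← Submodule.smul_mem_iff _ (pow_ne_zero N hgx), hgrad]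
    exact Submodule.add_mem_sup
      (Submodule.mem_map_of_mem (gradientAt_mem_gradientSpace hr x))
      (Submodule.smul_mem _ _ (Submodule.mem_span_singleton_self _))
  · refine sup_le ?_ ((Submodule.span_singleton_le_iff_mem _ _).mpr
      (gradientAt_mem_gradientSpace hgI _))
    refine Submodule.map_le_iff_le_comap.mpr (gradientSpace_le_iff.mpr fun r hr => ?_)
    have hmem := gradientAt_mem_gradientSpace (Ideal.mem_comap.mp hr) (Fin.cons t x)
    rwa [gradientAt_cons_rename_succ] at hmem

theorem jacobianRank_cons_eq_add_one (hgI : g ∈ I) (hg : g.degreeOf 0 ≤ 1)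
    (hgx : eval x ((finSuccEquiv K n g).coeff 1) ≠ 0) {t : K}
    (ht : ∀ f ∈ I, eval (Fin.cons t x : Fin (n + 1) → K) f = 0) :
    jacobianRank I (Fin.cons t x) = jacobianRank (elimIdeal I) x + 1 := by
  have hinj : Function.Injective (LinearMap.vecCons (0 : (Fin n → K) →ₗ[K] K) LinearMap.id) :=
    fun v w hvw => Fin.cons_right_injective (α := fun _ => K) (0 : K) hvw
  have hnotMem : gradientAt (Fin.cons t x) g ∉
      (gradientSpace (elimIdeal I) x).map (LinearMap.vecCons 0 LinearMap.id) := by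
    rintro ⟨v, -, hv⟩
    apply hgx
    rw [← gradientAt_cons_apply_zero_of_degreeOf_le_one hg t x, ← hv]
    rfl
  rw [jacobianRank_eq_finrank_gradientSpace, jacobianRank_eq_finrank_gradientSpace,
    gradientSpace_cons_eq_sup hgI hg hgx ht, Submodule.finrank_sup_span_singleton hnotMem,
    ← (Submodule.equivMapOfInjective _ hinj _).finrank_eq]

end Elimination

section Projection

variable {K : Type*} [Field K] {n : ℕ} {I : Ideal (MvPolynomial (Fin (n + 1)) K)}

theorem mk_mem_projV_iff (hI : IsHomog I) {v : Fin (n + 1) → K} (hv : v ≠ 0) :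
    Projectivization.mk K v hv ∈ projV I ↔ ∀ f ∈ I, eval v f = 0 := by
  obtain ⟨u, hu⟩ := Projectivization.exists_smul_eq_mk_rep K v hv
  simp only [projV, Set.mem_ofPred_eq, ← hu]
  refine ⟨fun h => ?_, fun h => eval_smul_eq_zero_of_isHomog hI h (u : K)⟩
  simpa only [← Units.smul_def, inv_smul_smul] using
    eval_smul_eq_zero_of_isHomog hI h ((u⁻¹ : Kˣ) : K)

theorem cons_ne_zero {α : Type*} [Zero α] {x : Fin n → α} (hx : x ≠ 0) (t : α) :
    (Fin.cons t x : Fin (n + 1) → α) ≠ 0 :=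
  fun h => hx (funext fun i => congrFun h i.succ)

theorem exists_rep_succ_eq_smul_iff {x : Fin n → K} (hx : x ≠ 0)
    (Q : Projectivization K (Fin (n + 1) → K)) :
    (∃ c : K, c ≠ 0 ∧ (fun i : Fin n => Q.rep i.succ) = c • x) ↔
      ∃ t : K, Q = Projectivization.mk K (Fin.cons t x) (cons_ne_zero hx t) := by
  constructor
  · rintro ⟨c, hc, htail⟩
    refine ⟨c⁻¹ * Q.rep 0, ?_⟩
    rw [← Q.mk_rep, Projectivization.mk_eq_mk_iff']
    refine ⟨c, funext (Fin.cases ?_ fun i => (congrFun htail i).symm)⟩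
    simp [hc]
  · rintro ⟨t, rfl⟩
    obtain ⟨u, hu⟩ := Projectivization.exists_smul_eq_mk_rep K _ (cons_ne_zero hx t)
    exact ⟨u, u.ne_zero, funext fun i => (congrFun hu i.succ).symm⟩

theorem existsUnique_fiber_and_jacobianRank_eq_add_one (hI : IsHomog I)
    {g : MvPolynomial (Fin (n + 1)) K} (hgI : g ∈ I) (hg : g.degreeOf 0 ≤ 1)
    {x : Fin n → K} (hx : x ∈ projZeros (elimIdeal I))
    (hgx : eval x ((finSuccEquiv K n g).coeff 1) ≠ 0) :
    (∃! Q : Projectivization K (Fin (n + 1) → K), Q ∈ projV I ∧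
      ∃ c : K, c ≠ 0 ∧ (fun i : Fin n => Q.rep i.succ) = c • x) ∧
    ∀ Q : Projectivization K (Fin (n + 1) → K), Q ∈ projV I →
      (∃ c : K, c ≠ 0 ∧ (fun i : Fin n => Q.rep i.succ) = c • x) →
      jacobianRank I Q.rep = jacobianRank (elimIdeal I) x + 1 := by
  obtain ⟨hx0, hxI⟩ := hx
  have hmem (t : K) := (mk_mem_projV_iff hI (cons_ne_zero hx0 t)).trans
    (forall_eval_cons_eq_zero_iff hgI hg hxI hgx t)
  simp only [exists_rep_succ_eq_smul_iff hx0]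
  refine ⟨⟨_, ⟨(hmem _).mpr rfl, _, rfl⟩, ?_⟩, ?_⟩
  · rintro _ ⟨hQ, t, rfl⟩
    obtain rfl := (hmem t).mp hQ
    rfl
  · rintro _ hQ ⟨t, rfl⟩
    rw [jacobianRank_mk_rep hI]
    exact jacobianRank_cons_eq_add_one hgI hg hgx ((mk_mem_projV_iff hI _).mp hQ)

end Projection

section LeadingTerm

theorem degreeOf_lt_of_mdeg_lt_single {σ R : Type*} [CommSemiring R] {m : MonomialOrder σ}
    {f : MvPolynomial σ R} {i : σ} {k : ℕ}
    (hf : m.toSyn (m.mdeg f) < m.toSyn (Finsupp.single i k)) : f.degreeOf i < k := by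
  have hk : 0 < k := Nat.pos_of_ne_zero fun hk => by
    rw [hk, Finsupp.single_zero, map_zero] at hf
    exact (m.zero_le _).not_gt hf
  refine (degreeOf_lt_iff hk).mpr fun s hs => ?_
  by_contra! hks
  refine hf.not_ge ?_
  calc
    m.toSyn (Finsupp.single i k) ≤ m.toSyn s := m.toSyn_monotone (Finsupp.single_le_iff.mpr hks)
    _ ≤ m.toSyn (m.mdeg f) := m.le_degree hs

theorem degreeOf_homogeneousComponent_le {σ R : Type*} [CommSemiring R] (f : MvPolynomial σ R)
    (i : σ) (d : ℕ) : (homogeneousComponent d f).degreeOf i ≤ f.degreeOf i := by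
  classical
  refine degreeOf_le_iff.mpr fun s hs => monomial_le_degreeOf i ?_
  rw [support_homogeneousComponent] at hs
  exact (Finset.mem_filter.mp hs).1

variable {n : ℕ}

theorem degreeOf_zero_le_one_of_mdeg_eq_expOf_pair {R : Type*} [CommSemiring R]
    {m : MonomialOrder (Fin (n + 1))} (hm : m.Descending) {f : MvPolynomial (Fin (n + 1)) R}
    {j : Fin (n + 1)} (hj : 0 < j) (hf : m.mdeg f = expOf {0, j}) : f.degreeOf 0 ≤ 1 := by
  refine Nat.lt_succ_iff.mp (degreeOf_lt_of_mdeg_lt_single (m := m) ?_)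
  rw [hf, expOf, Finset.sum_pair hj.ne, Nat.succ_eq_add_one, Finsupp.single_add, map_add, map_add]
  exact add_lt_add_right (hm 0 j hj) _

theorem eval_coordPoint_coeff_one_homogeneousComponent_two {R : Type*} [CommSemiring R]
    (f : MvPolynomial (Fin (n + 1)) R) (a : Fin n) :
    eval (fun i => if i = a then 1 else 0)
        ((finSuccEquiv R n (homogeneousComponent 2 f)).coeff 1) =
      coeff (Finsupp.single 0 1 + Finsupp.single a.succ 1) f := by
  have hcons : (Finsupp.single a 1).cons 1 =
      (Finsupp.single 0 1 + Finsupp.single a.succ 1 : Fin (n + 1) →₀ ℕ) := by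
    ext i
    refine Fin.cases ?_ (fun k => ?_) i <;> simp [Finsupp.single_apply]
  have hlinear := (homogeneousComponent_isHomogeneous 2 f).finSuccEquiv_coeff_isHomogeneous 1 1 rfl
  rw [eval_coordPoint_of_isHomogeneous hlinear, finSuccEquiv_coeff_coeff, hcons,
    coeff_homogeneousComponent, if_pos (by simp)]

theorem exists_mem_degreeOf_le_one_and_eval_coordPoint_ne_zero {K : Type*} [Field K]
    {I : Ideal (MvPolynomial (Fin (n + 1)) K)} (hI : IsHomog I)
    {m : MonomialOrder (Fin (n + 1))} (hm : m.Descending) {g : MvPolynomial (Fin (n + 1)) K}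
    (hgI : g ∈ I) {j : Fin (n + 1)} (hj : 0 < j) (hg : m.mdeg g = expOf {0, j}) {a : Fin n}
    (ha : Finsupp.single 0 1 + Finsupp.single a.succ 1 ∈ g.support) :
    ∃ G ∈ I, G.degreeOf 0 ≤ 1 ∧
      eval (fun i => if i = a then 1 else 0) ((finSuccEquiv K n G).coeff 1) ≠ 0 := by
  refine ⟨homogeneousComponent 2 g, hI g hgI 2, ?_, ?_⟩
  · exact (degreeOf_homogeneousComponent_le g 0 2).trans
      (degreeOf_zero_le_one_of_mdeg_eq_expOf_pair hm hj hg)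
  · rw [eval_coordPoint_coeff_one_homogeneousComponent_two]
    exact mem_support_iff.mp ha

end LeadingTerm

theorem SComplex.IsGraph.two_le_of_card_eq_two_of_notMem_faces {n : ℕ} {Δ : SComplex n}
    (hΔ : Δ.IsGraph) {s : Finset (Fin (n + 1))} (hs : s.card = 2) (hsΔ : s ∉ Δ.faces) :
    2 ≤ n := by
  obtain ⟨-, e, heΔ, he⟩ := hΔ
  by_contra! hn
  have huniv (u : Finset (Fin (n + 1))) (hu : u.card = 2) : u = Finset.univ :=
    Finset.eq_univ_of_card u <| by
      have hle := Finset.card_le_univ u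
      rw [Fintype.card_fin] at hle ⊢
      omega
  exact hsΔ (by rwa [huniv s hs, ← huniv e he])

theorem unique_fiber_and_singular_iff_general {K : Type*} [Field K] {n : ℕ} (hn : 2 ≤ n)
    {m : MonomialOrder (Fin (n + 1))} (hm : m.Descending)
    {I : Ideal (MvPolynomial (Fin (n + 1)) K)} (hI : IsHomog I)
    {g : MvPolynomial (Fin (n + 1)) K} (hgI : g ∈ I)
    {j : Fin (n + 1)} (hj : 0 < j) (hglead : m.mdeg g = expOf {0, j}) {a : Fin n}
    (hPa : ∀ f ∈ elimIdeal I, eval (fun i => if i = a then 1 else 0) f = 0)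
    (hga : Finsupp.single 0 1 + Finsupp.single a.succ 1 ∈ g.support) :
    (∃! Q : Projectivization K (Fin (n + 1) → K), Q ∈ projV I ∧
      ∃ c : K, c ≠ 0 ∧
        (fun i : Fin n => Q.rep i.succ) = c • fun i : Fin n => if i = a then (1 : K) else 0) ∧
    ∀ Q : Projectivization K (Fin (n + 1) → K), Q ∈ projV I →
      (∃ c : K, c ≠ 0 ∧
        (fun i : Fin n => Q.rep i.succ) = c • fun i : Fin n => if i = a then (1 : K) else 0) →
      (¬ jacobianRank I Q.rep = n - 1 ↔
        ¬ jacobianRank (elimIdeal I) (fun i : Fin n => if i = a then (1 : K) else 0) = n - 2) := by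
  obtain ⟨G, hGI, hG, hGa⟩ :=
    exists_mem_degreeOf_le_one_and_eval_coordPoint_ne_zero hI hm hgI hj hglead hga
  obtain ⟨hfiber, hrank⟩ := existsUnique_fiber_and_jacobianRank_eq_add_one hI hGI hG
    ⟨fun h0 => by simpa using congrFun h0 a, hPa⟩ hGa
  refine ⟨hfiber, fun Q hQ hπQ => ?_⟩
  rw [hrank Q hQ hπQ, show n - 1 = n - 2 + 1 by lia, Nat.add_right_cancel_iff]

/-- **Statement 10.** Setting: `K` algebraically closed, `X_0 > ⋯ > X_n`, `in_<(I) = I_Δ` for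
a graph `Δ` with every `i` a vertex, `X = V(I) ⊆ ℙⁿ` a connected curve, `0` a free vertex of
`Δ`, and `{g_σ}` a Gröbner basis of `I` with `in_<(g_σ) = X_σ`.  Let `X' ⊆ ℙ^{n-1}` be the
closure of the projection of `X` from `P_0`, defined by the elimination ideal
`I' = I ∩ K[X_1, …, X_n]`.  If the coordinate point `P'_a` lies on `X'` and `X_0X_a` occurs in
some `g_{0j}`, then there is a unique point `Q ∈ X` projecting to `P'_a`, and `X` is singular
at `Q` iff `X'` is singular at `P'_a`. -/
theorem unique_fiber_and_singular_iff {K : Type*} [Field K] [IsAlgClosed K] {n : ℕ}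
    (m : MonomialOrder (Fin (n + 1))) (hm : m.Descending)
    (Δ : SComplex n) (hgraph : Δ.IsGraph)
    (hvert : ∀ i : Fin (n + 1), ({i} : Finset (Fin (n + 1))) ∈ Δ.faces)
    (I : Ideal (MvPolynomial (Fin (n + 1)) K)) (hI : IsHomog I)
    (hin : initialIdeal m I = Δ.srIdeal K)
    (hcurve : ringKrullDim (MvPolynomial (Fin (n + 1)) K ⧸ I) = 2)
    (hconn : IsConnectedProjVariety I)
    (hfree : Δ.FreeVertex 0)
    (g : Finset (Fin (n + 1)) → MvPolynomial (Fin (n + 1)) K)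
    (hgI : ∀ s ∈ Δ.mnf, g s ∈ I)
    (hglead : ∀ s ∈ Δ.mnf, m.mdeg (g s) = expOf s)
    -- the coordinate point `P'_a ∈ ℙ^{n-1}` lies on `X' = V(I')`:
    (a : Fin n)
    (hPa : ∀ f ∈ Ideal.comap (rename (Fin.succ : Fin n → Fin (n + 1))) I,
      eval (fun i : Fin n => if i = a then (1 : K) else 0) f = 0)
    -- `X_0 X_a` occurs in the support of some `g_{0j}`:
    (hj : ∃ j : Fin n, ({0, Fin.succ j} : Finset (Fin (n + 1))) ∈ Δ.mnf ∧
      Finsupp.single (0 : Fin (n + 1)) 1 + Finsupp.single (Fin.succ a) 1 ∈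
        (g {0, Fin.succ j}).support) :
    -- there is a unique point `Q ∈ X` with `π(Q) = P'_a`:
    (∃! Q : Projectivization K (Fin (n + 1) → K), Q ∈ projV I ∧
      ∃ c : K, c ≠ 0 ∧
        (fun i : Fin n => Q.rep i.succ) = c • fun i : Fin n => if i = a then (1 : K) else 0) ∧
    -- and `X` is singular at `Q` iff `X'` is singular at `P'_a`:
    (∀ Q : Projectivization K (Fin (n + 1) → K), Q ∈ projV I →
      (∃ c : K, c ≠ 0 ∧
        (fun i : Fin n => Q.rep i.succ) = c • fun i : Fin n => if i = a then (1 : K) else 0) →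
      (¬ jacobianRank I Q.rep = n - 1 ↔
        ¬ jacobianRank (Ideal.comap (rename (Fin.succ : Fin n → Fin (n + 1))) I)
            (fun i : Fin n => if i = a then (1 : K) else 0) = n - 2)) := by
  obtain ⟨j, hjΔ, hja⟩ := hj
  have hn : 2 ≤ n := hgraph.two_le_of_card_eq_two_of_notMem_faces
    (Finset.card_pair j.succ_ne_zero.symm) hjΔ.1
  exact unique_fiber_and_singular_iff_general hn hm hI (hgI _ hjΔ) j.succ_pos (hglead _ hjΔ) hPa hja
end
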